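/- Let a, b, c, d be vertices of a convex polygon P in clockwise order. Then at least one of the following holds: (1) dist(a,x) > dist(a,d) for every vertex x of P strictly between c and d (in clockwise order from c to d) and for x = c; (2) dist(b,x) > dist(b,c) for every vertex x of P strictly between c and d and for x = d; (3) dist(c,x) > dist(b,c) for every vertex x of P strictly between a and b and for x = a; (4) dist(d,x) > dist(a,d) for every vertex x of P strictly between a and b and for x = b. -/

import Mathlib

/-- The cross product (signed area determinant) of two vectors in the Euclidean plane. -/
noncomputable def cross2 (u v : EuclideanSpace ℝ (Fin 2)) : ℝ := u 0 * v 1 - u 1 * v 0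

/-- The vertices `P 0, P 1, …` form a convex polygon listed in clockwise order:
every triple of vertices in index order is a clockwise turn. -/
def ClockwiseConvexPos {n : ℕ} (P : Fin n → EuclideanSpace ℝ (Fin 2)) : Prop :=
  ∀ i j k : Fin n, i < j → j < k → cross2 (P j - P i) (P k - P i) < 0

/-!
The quadrilateral `abcd` is convex, so its angles sum to `2π` and one of them is at least `π / 2`.
Say it is the angle `∠ a d c`. For every vertex `x` from `c` up to `d`, the ray from `d` to `x`
makes at least as large an angle with the ray from `d` to `a`, so `ad` is strictly shorter than
`ax`, the side opposite a non-acute angle of the triangle `adx`. The other three angles give the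
other three cases.
-/

open scoped RealInnerProductSpace

theorem norm_lt_norm_sub_of_inner_nonpos {E : Type*} [NormedAddCommGroup E]
    [InnerProductSpace ℝ E] {u w : E} (huw : ⟪u, w⟫ ≤ 0) (hw : w ≠ 0) : ‖u‖ < ‖u - w‖ := by
  have hw_pos : 0 < ‖w‖ ^ 2 := pow_pos (norm_pos_iff.2 hw) 2
  refine lt_of_pow_lt_pow_left₀ 2 (norm_nonneg _) ?_
  rw [norm_sub_sq_real]
  linarith

section CrossProduct

variable {u v w : EuclideanSpace ℝ (Fin 2)}

theorem cross2_swap (u v : EuclideanSpace ℝ (Fin 2)) : cross2 v u = -cross2 u v := by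
  unfold cross2
  ring

theorem cross2_self (u : EuclideanSpace ℝ (Fin 2)) : cross2 u u = 0 := by
  unfold cross2
  ring

-- This pairs `z` with the linear relation `cross2 u w • v = cross2 u v • w + cross2 v w • u`.
theorem cross2_mul_inner (u v w z : EuclideanSpace ℝ (Fin 2)) :
    cross2 u w * ⟪z, v⟫ = cross2 u v * ⟪z, w⟫ + cross2 v w * ⟪z, u⟫ := by
  simp only [cross2, PiLp.inner_apply, Fin.sum_univ_two, RCLike.inner_apply, conj_trivial]
  ring

-- The sign conditions say that `v` lies in the cone spanned by `u` and `w`; as products, they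
-- cover both orientations.
theorem inner_nonpos_of_cross2_mul (huv : ⟪u, v⟫ ≤ 0) (hside : 0 < cross2 u v * cross2 u w)
    (hbetween : 0 ≤ cross2 u v * cross2 v w) : ⟪u, w⟫ ≤ 0 := by
  have hsq : 0 < cross2 u v ^ 2 := sq_pos_of_ne_zero (left_ne_zero_of_mul hside.ne')
  refine nonpos_of_mul_nonpos_right ?_ hsq
  calc cross2 u v ^ 2 * ⟪u, w⟫
      = cross2 u v * cross2 u w * ⟪u, v⟫ - cross2 u v * cross2 v w * ⟪u, u⟫ := by
        linear_combination -cross2 u v * cross2_mul_inner u v w u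
    _ ≤ 0 := sub_nonpos.2 <| (mul_nonpos_of_nonneg_of_nonpos hside.le huv).trans
        (mul_nonneg hbetween real_inner_self_nonneg)

-- Two successive clockwise turns, each by more than `π / 2`, add up to more than `π`.
theorem cross2_pos_of_cross2_neg_of_inner_neg (huv : cross2 u v < 0) (hvw : cross2 v w < 0)
    (huv' : ⟪u, v⟫ < 0) (hvw' : ⟪v, w⟫ < 0) : 0 < cross2 u w := by
  refine pos_of_mul_pos_left ?_ (real_inner_self_nonneg (x := v))
  rw [cross2_mul_inner, real_inner_comm u v]
  exact add_pos (mul_pos_of_neg_of_neg huv hvw') (mul_pos_of_neg_of_neg hvw huv')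

end CrossProduct

/-- The triangle `a b c` is nondegenerate and its vertices are listed in clockwise order. As in
`ClockwiseConvexPos`, this is expressed by the sign of the cross product of the sides at `a`. -/
def IsClockwise (a b c : EuclideanSpace ℝ (Fin 2)) : Prop := cross2 (b - a) (c - a) < 0

section Clockwise

variable {a b c d p q r x : EuclideanSpace ℝ (Fin 2)}

theorem IsClockwise.rotate (h : IsClockwise a b c) : IsClockwise b c a := by
  simp only [IsClockwise, cross2, PiLp.sub_apply] at h ⊢
  linarith

theorem IsClockwise.cross2_sides_neg (h : IsClockwise a b c) : cross2 (b - a) (c - b) < 0 := by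
  simp only [IsClockwise, cross2, PiLp.sub_apply] at h ⊢
  linarith

theorem IsClockwise.cross2_swap_pos (h : IsClockwise a b c) : 0 < cross2 (c - a) (b - a) := by
  rw [cross2_swap]
  exact neg_pos.2 h

theorem cross2_opposite_sides_pos (habc : IsClockwise a b c) (hbcd : IsClockwise b c d)
    (hb : 0 < ⟪c - b, a - b⟫) (hc : 0 < ⟪b - c, d - c⟫) : 0 < cross2 (b - a) (d - c) := by
  refine cross2_pos_of_cross2_neg_of_inner_neg habc.cross2_sides_neg hbcd.cross2_sides_neg ?_ ?_
  · rwa [← neg_sub a b, inner_neg_left, real_inner_comm, neg_lt_zero]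
  · rwa [← neg_sub b c, inner_neg_left, neg_lt_zero]

theorem quadrilateral_inner_nonpos (habc : IsClockwise a b c) (hbcd : IsClockwise b c d)
    (hcda : IsClockwise c d a) (hdab : IsClockwise d a b) :
    ⟪a - d, c - d⟫ ≤ 0 ∨ ⟪b - c, d - c⟫ ≤ 0 ∨ ⟪c - b, a - b⟫ ≤ 0 ∨ ⟪d - a, b - a⟫ ≤ 0 := by
  by_contra! hacute
  obtain ⟨hd, hc, hb, ha⟩ := hacute
  have hpos : 0 < cross2 (b - a) (d - c) := cross2_opposite_sides_pos habc hbcd hb hc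
  have hneg : 0 < cross2 (d - c) (b - a) := cross2_opposite_sides_pos hcda hdab hd ha
  rw [cross2_swap] at hneg
  linarith

theorem dist_lt_dist_of_cross2_mul (hangle : ⟪p - q, r - q⟫ ≤ 0)
    (hside : 0 < cross2 (p - q) (r - q) * cross2 (p - q) (x - q))
    (hbetween : 0 ≤ cross2 (p - q) (r - q) * cross2 (r - q) (x - q)) : dist p q < dist p x := by
  have hxq : x - q ≠ 0 := by
    intro h
    simp [h, cross2] at hside
  have hlt := norm_lt_norm_sub_of_inner_nonpos
    (inner_nonpos_of_cross2_mul hangle hside hbetween) hxq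
  rwa [sub_sub_sub_cancel_right, ← dist_eq_norm, ← dist_eq_norm] at hlt

end Clockwise

section Arcs

variable {ι : Type*} [PartialOrder ι] {P : ι → EuclideanSpace ℝ (Fin 2)}

theorem dist_lt_dist_of_arc_before {p : EuclideanSpace ℝ (Fin 2)} {q r : ι} (hrq : r < q)
    (hangle : ⟪p - P q, P r - P q⟫ ≤ 0)
    (hp : ∀ x, r ≤ x → x < q → IsClockwise p (P x) (P q))
    (harc : ∀ x, r < x → x < q → IsClockwise (P r) (P x) (P q)) (x : ι) (hrx : r ≤ x)
    (hxq : x < q) : dist p (P q) < dist p (P x) := by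
  have hpr : cross2 (p - P q) (P r - P q) < 0 := (hp r le_rfl hrq).rotate.rotate
  have hpx : cross2 (p - P q) (P x - P q) < 0 := (hp x hrx hxq).rotate.rotate
  have hrx' : cross2 (P r - P q) (P x - P q) ≤ 0 := by
    rcases hrx.eq_or_lt with rfl | hlt
    · exact (cross2_self _).le
    · exact (harc x hlt hxq).rotate.rotate.le
  exact dist_lt_dist_of_cross2_mul hangle (mul_pos_of_neg_of_neg hpr hpx)
    (mul_nonneg_of_nonpos_of_nonpos hpr.le hrx')

theorem dist_lt_dist_of_arc_after {p : EuclideanSpace ℝ (Fin 2)} {q r : ι} (hqr : q < r)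
    (hangle : ⟪p - P q, P r - P q⟫ ≤ 0)
    (hp : ∀ x, q < x → x ≤ r → IsClockwise p (P q) (P x))
    (harc : ∀ x, q < x → x < r → IsClockwise (P q) (P x) (P r)) (x : ι) (hqx : q < x)
    (hxr : x ≤ r) : dist p (P q) < dist p (P x) := by
  have hpr : 0 < cross2 (p - P q) (P r - P q) := (hp r hqr le_rfl).rotate.cross2_swap_pos
  have hpx : 0 < cross2 (p - P q) (P x - P q) := (hp x hqx hxr).rotate.cross2_swap_pos
  have hrx : 0 ≤ cross2 (P r - P q) (P x - P q) := by
    rcases hxr.eq_or_lt with rfl | hlt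
    · exact (cross2_self _).ge
    · exact (harc x hqx hlt).cross2_swap_pos.le
  exact dist_lt_dist_of_cross2_mul hangle (mul_pos hpr hpx) (mul_nonneg hpr.le hrx)

theorem stmt3_general (hP : ∀ i j k, i < j → j < k → IsClockwise (P i) (P j) (P k))
    {a b c d : ι} (hab : a < b) (hbc : b < c) (hcd : c < d) :
    (∀ x, c ≤ x → x < d → dist (P a) (P d) < dist (P a) (P x)) ∨
    (∀ x, c < x → x ≤ d → dist (P b) (P c) < dist (P b) (P x)) ∨
    (∀ x, a ≤ x → x < b → dist (P b) (P c) < dist (P c) (P x)) ∨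
    (∀ x, a < x → x ≤ b → dist (P a) (P d) < dist (P d) (P x)) := by
  have hac := hab.trans hbc
  have hbd := hbc.trans hcd
  rcases quadrilateral_inner_nonpos (hP a b c hab hbc) (hP b c d hbc hcd)
    (hP a c d hac hcd).rotate (hP a b d hab hbd).rotate.rotate with hd | hc | hb | ha
  · exact .inl <| dist_lt_dist_of_arc_before hcd hd
      (fun x hcx hxd ↦ hP a x d (hac.trans_le hcx) hxd) (fun x hcx hxd ↦ hP c x d hcx hxd)
  · exact .inr <| .inl <| dist_lt_dist_of_arc_after hcd hc
      (fun x hcx _ ↦ hP b c x hbc hcx) (fun x hcx hxd ↦ hP c x d hcx hxd)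
  · rw [dist_comm (P b) (P c)]
    exact .inr <| .inr <| .inl <| dist_lt_dist_of_arc_before hab hb
      (fun x _ hxb ↦ (hP x b c hxb hbc).rotate.rotate) (fun x hax hxb ↦ hP a x b hax hxb)
  · rw [dist_comm (P a) (P d)]
    exact .inr <| .inr <| .inr <| dist_lt_dist_of_arc_after hab ha
      (fun x hax hxb ↦ (hP a x d hax (hxb.trans_lt hbd)).rotate.rotate)
      (fun x hax hxb ↦ hP a x b hax hxb)

end Arcs

/-- Fact 2: for vertices `a = P ia, b = P ib, c = P ic, d = P idd` of a convex polygon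
in clockwise order, at least one of the four stated cases occurs. -/
theorem stmt3 {n : ℕ} (P : Fin n → EuclideanSpace ℝ (Fin 2)) (hP : ClockwiseConvexPos P)
    (ia ib ic idd : Fin n) (h1 : ia < ib) (h2 : ib < ic) (h3 : ic < idd) :
    (∀ x : Fin n, ic ≤ x → x < idd → dist (P ia) (P idd) < dist (P ia) (P x)) ∨
    (∀ x : Fin n, ic < x → x ≤ idd → dist (P ib) (P ic) < dist (P ib) (P x)) ∨
    (∀ x : Fin n, ia ≤ x → x < ib → dist (P ib) (P ic) < dist (P ic) (P x)) ∨
    (∀ x : Fin n, ia < x → x ≤ ib → dist (P ia) (P idd) < dist (P idd) (P x)) :=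
  stmt3_general hP h1 h2 h3
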